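/- arXiv:2105.01368 — 3 statements merged into one kernel-verified Lean document; each statement's English description precedes it below -/
import Mathlib

section
/- Let n ≥ 1, let Ω ⊆ ℝⁿ be open, m > 1, and let ε, γ : Ω → ℝ be continuously differentiable with ε > 0 and γ > 0. Let v : [0,∞) × Ω → [0,∞) be continuous with v(0,x) = 0 for all x ∈ Ω such that: (i) for each x, t ↦ v(t,x)^{1/m} is continuously differentiable on [0,∞); (ii) for each t, x ↦ v(t,x) is twice continuously differentiable, with ∇ₓv and the second spatial derivatives jointly continuous in (t,x); (iii) for each compact K ⊆ Ω there exist C, k such that v(t,x) + |∂ₜ(v^{1/m})(t,x)| + |∇ₓv(t,x)| + |Dₓ²v(t,x)| ≤ C(1+t)^k for all (t,x) ∈ [0,∞) × K; and (iv) ε(x) ∂ₜ(v(t,x)^{1/m}) = ∇·(γ(x)∇ₓv(t,x)) for all (t,x) ∈ (0,∞) × Ω. Then for every h > 0 the function V(h,·) : Ω → ℝ defined by V(h,x) = ∫₀^∞ e^{-t/h} v(t,x) dt is twice continuously differentiable and satisfies ∇·(γ(x)∇V(h,x)) = (1/h) ε(x) ∫₀^∞ e^{-t/h} v(t,x)^{1/m}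 dt for all x ∈ Ω. -/
/-!
The Laplace transform `x ↦ ∫₀^∞ e^{-t/h} f(t,x) dt` commutes with `∂ₓ` as soon as `f` and `∂ₓf` are
jointly continuous and grow at most polynomially in `t`, locally uniformly in `x`: on a compact
neighbourhood of `x` the integrands are dominated by `C (1+t)^k e^{-t/h}`, which is integrable
(`laplace_hasFDerivAt`). Using this for `v` and for `∇ₓv`, together with continuity of the
transform of `Dₓ²v` (`laplace_continuousOn`), makes `V(h,·)` a `C²` function whose first two
derivatives are the transforms of those of `v`.

For `C²` functions `u`, `∇·(γ∇u)` at a point is linear in `(Du, D²u)` (`divGammaGrad_eq`), so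
`∇·(γ∇V)` is the transform of `∇·(γ∇v) = ε ∂ₜ(v^{1/m})`. Integration by parts in time
(`laplace_deriv`) then trades `∂ₜ` for the factor `1/h`; the boundary term at `t = 0` vanishes since
`v(0,·) = 0`, the one at infinity since `v^{1/m} ≤ 1 + v` grows at most polynomially.
-/

open MeasureTheory Real Set

/-- The `i`-th partial derivative of `f : ℝⁿ → ℝ` at `x`. -/
noncomputable def partialDeriv' {n : ℕ} (f : (Fin n → ℝ) → ℝ) (i : Fin n)
    (x : Fin n → ℝ) : ℝ :=
  fderiv ℝ f x (Pi.single i 1)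

/-- The divergence-form elliptic operator `∇·(γ∇u) = ∑ᵢ ∂ᵢ(γ ∂ᵢ u)` at `x`. -/
noncomputable def divGammaGrad {n : ℕ} (γ : (Fin n → ℝ) → ℝ) (u : (Fin n → ℝ) → ℝ)
    (x : Fin n → ℝ) : ℝ :=
  ∑ i : Fin n, partialDeriv' (fun y => γ y * partialDeriv' u i y) i x

open Filter Topology

lemma isBigO_exp_mul_rpow {h : ℝ} (hh : 0 < h) (C k : ℝ) :
    (fun t : ℝ => Real.exp (-t / h) * (C * (1 + t) ^ k)) =O[atTop]
      fun t => Real.exp (-(1 / (2 * h)) * t) := by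
  have h1 : (fun t : ℝ => (1 + t) ^ k) =o[atTop] fun t => Real.exp (1 / (2 * h) * (1 + t)) :=
    (isLittleO_rpow_exp_pos_mul_atTop k (b := 1 / (2 * h)) (by positivity)).comp_tendsto
      (tendsto_atTop_add_const_left atTop 1 tendsto_id)
  have h2 := ((Asymptotics.isBigO_refl (fun t : ℝ => Real.exp (-t / h)) atTop).mul
    (h1.isBigO.const_mul_left C)).trans (Asymptotics.isBigO_const_mul_self
      (Real.exp (1 / (2 * h))) (fun t : ℝ => Real.exp (-(1 / (2 * h)) * t)) atTop |>.congr_left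
        (f₂ := fun t => Real.exp (-t / h) * Real.exp (1 / (2 * h) * (1 + t))) fun t => by
          rw [← Real.exp_add, ← Real.exp_add]
          congr 1
          field_simp
          ring)
  exact h2

lemma integrableOn_exp_mul_rpow {h : ℝ} (hh : 0 < h) (C k : ℝ) :
    IntegrableOn (fun t : ℝ => Real.exp (-t / h) * (C * (1 + t) ^ k)) (Ioi 0) := by
  refine integrable_of_isBigO_exp_neg (b := 1 / (2 * h)) (by positivity) ?_
    (isBigO_exp_mul_rpow hh C k)
  refine ContinuousOn.mul (by fun_prop) (continuousOn_const.mul ?_)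
  refine ContinuousOn.rpow_const (by fun_prop) fun t ht => Or.inl ?_
  have : (0 : ℝ) ≤ t := ht
  positivity

lemma tendsto_exp_mul_rpow {h : ℝ} (hh : 0 < h) (C k : ℝ) :
    Tendsto (fun t : ℝ => Real.exp (-t / h) * (C * (1 + t) ^ k)) atTop (𝓝 0) := by
  refine (isBigO_exp_mul_rpow hh C k).trans_tendsto ?_
  refine Real.tendsto_exp_atBot.comp ?_
  exact tendsto_id.const_mul_atTop_of_neg (by simp; positivity)

section Laplace

variable {E F : Type*} [NormedAddCommGroup E] [NormedAddCommGroup F]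

/-- A time-dependent family `f(t,x)` on `[0,∞) × Ω` is tempered if it is jointly continuous and
grows at most polynomially in `t`, locally uniformly in `x`. -/
structure Tempered (Ω : Set E) (f : ℝ → E → F) : Prop where
  cont : ContinuousOn (fun p : ℝ × E => f p.1 p.2) (Ici (0 : ℝ) ×ˢ Ω)
  growth : ∀ K ⊆ Ω, IsCompact K → ∃ C k : ℝ, ∀ t ∈ Ici (0 : ℝ), ∀ x ∈ K, ‖f t x‖ ≤ C * (1 + t) ^ k

variable {Ω : Set E} {f : ℝ → E → F}

lemma Tempered.cont_time (hf : Tempered Ω f) {x : E} (hx : x ∈ Ω) :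
    ContinuousOn (fun t => f t x) (Ici 0) :=
  hf.cont.comp (f := fun t : ℝ => (t, x)) (by fun_prop) fun _ ht => ⟨ht, hx⟩

lemma Tempered.cont_space (hf : Tempered Ω f) {t : ℝ} (ht : t ∈ Ici (0 : ℝ)) :
    ContinuousOn (f t) Ω :=
  hf.cont.comp (f := fun x : E => (t, x)) (by fun_prop) fun _ hx => ⟨ht, hx⟩

variable [NormedSpace ℝ F]

lemma norm_exp_smul_le {h C k t : ℝ} {y : F} (hy : ‖y‖ ≤ C * (1 + t) ^ k) :
    ‖Real.exp (-t / h) • y‖ ≤ Real.exp (-t / h) * (C * (1 + t) ^ k) := by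
  rw [norm_smul, Real.norm_eq_abs, abs_of_pos (Real.exp_pos _)]
  gcongr

lemma aestronglyMeasurable_exp_smul {h : ℝ} {g : ℝ → F} (hg : ContinuousOn g (Ici 0)) :
    AEStronglyMeasurable (fun t => Real.exp (-t / h) • g t) (volume.restrict (Ioi 0)) := by
  refine ContinuousOn.aestronglyMeasurable ?_ measurableSet_Ioi
  exact ContinuousOn.smul (by fun_prop) (hg.mono Ioi_subset_Ici_self)

lemma integrableOn_exp_smul {h C k : ℝ} (hh : 0 < h) {g : ℝ → F} (hg : ContinuousOn g (Ici 0))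
    (hb : ∀ t ∈ Ici (0 : ℝ), ‖g t‖ ≤ C * (1 + t) ^ k) :
    IntegrableOn (fun t => Real.exp (-t / h) • g t) (Ioi 0) := by
  refine (integrableOn_exp_mul_rpow hh C k).mono' (aestronglyMeasurable_exp_smul hg) ?_
  filter_upwards [ae_restrict_mem measurableSet_Ioi] with t ht
  exact norm_exp_smul_le (hb t (Ioi_subset_Ici_self ht))

lemma Tempered.integrableOn (hf : Tempered Ω f) {h : ℝ} (hh : 0 < h) {x : E} (hx : x ∈ Ω) :
    IntegrableOn (fun t => Real.exp (-t / h) • f t x) (Ioi 0) := by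
  obtain ⟨C, k, hC⟩ := hf.growth {x} (by simpa using hx) isCompact_singleton
  exact integrableOn_exp_smul hh (hf.cont_time hx) fun t ht => hC t ht x rfl

lemma laplace_continuousOn [LocallyCompactSpace E] (hΩ : IsOpen Ω) (hf : Tempered Ω f) {h : ℝ}
    (hh : 0 < h) : ContinuousOn (fun x => ∫ t in Ioi (0 : ℝ), Real.exp (-t / h) • f t x) Ω := by
  intro x hx
  obtain ⟨K, hK, hxK, hKΩ⟩ := exists_compact_subset hΩ hx
  obtain ⟨C, k, hC⟩ := hf.growth K hKΩ hK
  have hKn : K ∈ 𝓝 x := mem_interior_iff_mem_nhds.1 hxK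
  refine (continuousAt_of_dominated (bound := fun t => Real.exp (-t / h) * (C * (1 + t) ^ k))
    ?_ ?_ (integrableOn_exp_mul_rpow hh C k) ?_).continuousWithinAt
  · filter_upwards [hKn] with y hy using aestronglyMeasurable_exp_smul (hf.cont_time (hKΩ hy))
  · filter_upwards [hKn] with y hy
    filter_upwards [ae_restrict_mem measurableSet_Ioi] with t ht
    exact norm_exp_smul_le (hC t (Ioi_subset_Ici_self ht) y hy)
  · filter_upwards [ae_restrict_mem measurableSet_Ioi] with t ht
    exact ((hf.cont_space (Ioi_subset_Ici_self ht)).continuousAt (hΩ.mem_nhds hx)).const_smul _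

/-- Differentiation under the Laplace transform. -/
lemma laplace_hasFDerivAt [NormedSpace ℝ E] [LocallyCompactSpace E] (hΩ : IsOpen Ω) (hf : Tempered Ω f)
    (hd : ∀ t ∈ Ici (0 : ℝ), DifferentiableOn ℝ (f t) Ω)
    (hf' : Tempered Ω fun t => fderiv ℝ (f t)) {h : ℝ} (hh : 0 < h) {x : E} (hx : x ∈ Ω) :
    HasFDerivAt (fun x => ∫ t in Ioi (0 : ℝ), Real.exp (-t / h) • f t x)
      (∫ t in Ioi (0 : ℝ), Real.exp (-t / h) • fderiv ℝ (f t) x) x := by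
  obtain ⟨K, hK, hxK, hKΩ⟩ := exists_compact_subset hΩ hx
  obtain ⟨C, k, hC⟩ := hf'.growth K hKΩ hK
  have hKn : K ∈ 𝓝 x := mem_interior_iff_mem_nhds.1 hxK
  refine hasFDerivAt_integral_of_dominated_of_fderiv_le (𝕜 := ℝ) (s := K)
    (F := fun x t => Real.exp (-t / h) • f t x)
    (F' := fun x t => Real.exp (-t / h) • fderiv ℝ (f t) x)
    (bound := fun t => Real.exp (-t / h) * (C * (1 + t) ^ k)) hKn ?_ (hf.integrableOn hh hx)
    (hf'.integrableOn hh hx).aestronglyMeasurable ?_ (integrableOn_exp_mul_rpow hh C k) ?_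
  · filter_upwards [hKn] with y hy using aestronglyMeasurable_exp_smul (hf.cont_time (hKΩ hy))
  · filter_upwards [ae_restrict_mem measurableSet_Ioi] with t ht y hy
    exact norm_exp_smul_le (hC t (Ioi_subset_Ici_self ht) y hy)
  · filter_upwards [ae_restrict_mem measurableSet_Ioi] with t ht y hy
    exact (((hd t (Ioi_subset_Ici_self ht)).differentiableAt
      (hΩ.mem_nhds (hKΩ hy))).hasFDerivAt).const_smul _

end Laplace

/-- Integration by parts: the Laplace transform turns `∂ₜ` into multiplication by `1/h` for
functions vanishing at `t = 0`. -/
lemma laplace_deriv {h C k : ℝ} (hh : 0 < h) {w w' : ℝ → ℝ} (hw0 : w 0 = 0)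
    (hw : ∀ t ∈ Ici (0 : ℝ), HasDerivWithinAt w (w' t) (Ici 0) t)
    (hw'c : ContinuousOn w' (Ici 0))
    (hb : ∀ t ∈ Ici (0 : ℝ), ‖w t‖ ≤ C * (1 + t) ^ k)
    (hb' : ∀ t ∈ Ici (0 : ℝ), ‖w' t‖ ≤ C * (1 + t) ^ k) :
    ∫ t in Ioi (0 : ℝ), Real.exp (-t / h) * w' t =
      (1 / h) * ∫ t in Ioi (0 : ℝ), Real.exp (-t / h) * w t := by
  have hwc : ContinuousOn w (Ici 0) := fun t ht => (hw t ht).continuousWithinAt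
  have i1 : IntegrableOn (fun t => Real.exp (-t / h) * w t) (Ioi 0) :=
    integrableOn_exp_smul hh hwc hb
  have i2 : IntegrableOn (fun t => Real.exp (-t / h) * w' t) (Ioi 0) :=
    integrableOn_exp_smul hh hw'c hb'
  have key := integral_Ioi_of_hasDerivAt_of_tendsto (a := 0) (m := 0)
    (f := fun t => Real.exp (-t / h) * w t)
    (f' := fun t => Real.exp (-t / h) * w' t - (1 / h) * (Real.exp (-t / h) * w t)) ?_ ?_
    (i2.sub (i1.const_mul (1 / h))) ?_
  · rw [integral_sub i2 (i1.const_mul _), integral_const_mul, hw0] at key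
    linarith
  · exact ContinuousWithinAt.mul (by fun_prop) (hwc 0 self_mem_Ici)
  · intro t ht
    have h1 : HasDerivAt w (w' t) t :=
      (hw t (Ioi_subset_Ici_self ht)).hasDerivAt (Ici_mem_nhds ht)
    have h2 : HasDerivAt (fun t : ℝ => Real.exp (-t / h)) (Real.exp (-t / h) * (-1 / h)) t :=
      (((hasDerivAt_id t).neg).div_const h).exp
    exact (h2.fun_mul h1).congr_deriv (by ring)
  · refine squeeze_zero_norm' ?_ (tendsto_exp_mul_rpow hh C k)
    filter_upwards [eventually_ge_atTop 0] with t ht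
    exact norm_exp_smul_le (hb t ht)

/-- The product rule: `∇·(γ∇u) = ∑ᵢ (∂ᵢγ ∂ᵢu + γ ∂ᵢ∂ᵢu)`. -/
lemma divGammaGrad_eq {n : ℕ} {γ u : (Fin n → ℝ) → ℝ} {x : Fin n → ℝ}
    (hγ : DifferentiableAt ℝ γ x) (hu : DifferentiableAt ℝ (fderiv ℝ u) x) :
    divGammaGrad γ u x = ∑ i : Fin n,
      (fderiv ℝ γ x (Pi.single i 1) * fderiv ℝ u x (Pi.single i 1) +
        γ x * fderiv ℝ (fderiv ℝ u) x (Pi.single i 1) (Pi.single i 1)) := by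
  unfold divGammaGrad partialDeriv'
  refine Finset.sum_congr rfl fun i _ => ?_
  have h1 : HasFDerivAt (fun y => fderiv ℝ u y (Pi.single i 1))
      ((fderiv ℝ (fderiv ℝ u) x).flip (Pi.single i 1)) x := by
    simpa using hu.hasFDerivAt.clm_apply (hasFDerivAt_const (Pi.single i (1 : ℝ)) x)
  rw [(hγ.hasFDerivAt.fun_mul h1).fderiv]
  simp
  ring

lemma rpow_le_one_add {a p : ℝ} (ha : 0 ≤ a) (hp0 : 0 ≤ p) (hp : p ≤ 1) : a ^ p ≤ 1 + a := by
  rcases le_total a 1 with h | h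
  · linarith [Real.rpow_le_one ha h hp0]
  · calc a ^ p ≤ a ^ (1 : ℝ) := Real.rpow_le_rpow_of_exponent_le h hp
      _ ≤ 1 + a := by rw [Real.rpow_one]; linarith

/-- The Laplace transform in time converts the (rewritten) porous medium equation
`ε ∂ₜ(v^{1/m}) = ∇·(γ∇v)` into the family of elliptic equations
`∇·(γ∇V(h,·)) = (1/h) ε(x) ∫₀^∞ e^{-t/h} v(t,x)^{1/m} dt`, where
`V(h,x) = ∫₀^∞ e^{-t/h} v(t,x) dt`, indexed by `h > 0`. -/
theorem laplace_transform_pme (n : ℕ) (hn : 1 ≤ n) (Ω : Set (Fin n → ℝ)) (hΩ : IsOpen Ω)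
    (m : ℝ) (hm : 1 < m)
    (ε γ : (Fin n → ℝ) → ℝ)
    (hε : ContDiffOn ℝ 1 ε Ω) (hγ : ContDiffOn ℝ 1 γ Ω)
    (hεpos : ∀ x ∈ Ω, 0 < ε x) (hγpos : ∀ x ∈ Ω, 0 < γ x)
    (v : ℝ → (Fin n → ℝ) → ℝ) (vt : ℝ → (Fin n → ℝ) → ℝ)
    (hv_cont : ContinuousOn (fun p : ℝ × (Fin n → ℝ) => v p.1 p.2) (Ici (0:ℝ) ×ˢ Ω))
    (hv_nonneg : ∀ t ∈ Ici (0:ℝ), ∀ x ∈ Ω, 0 ≤ v t x)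
    (hv0 : ∀ x ∈ Ω, v 0 x = 0)
    -- (i) for each `x`, `t ↦ v(t,x)^{1/m}` is continuously differentiable on `[0,∞)`,
    -- with derivative `vt`
    (hi : ∀ x ∈ Ω, ∀ t ∈ Ici (0:ℝ),
      HasDerivWithinAt (fun s => v s x ^ (1 / m)) (vt t x) (Ici (0:ℝ)) t)
    (hi_cont : ∀ x ∈ Ω, ContinuousOn (fun t => vt t x) (Ici (0:ℝ)))
    -- (ii) for each `t`, `x ↦ v(t,x)` is twice continuously differentiable, with the
    -- spatial gradient and second spatial derivatives jointly continuous in `(t,x)`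
    (hii : ∀ t ∈ Ici (0:ℝ), ContDiffOn ℝ 2 (v t) Ω)
    (hii_cont1 : ContinuousOn
      (fun p : ℝ × (Fin n → ℝ) => fderiv ℝ (v p.1) p.2) (Ici (0:ℝ) ×ˢ Ω))
    (hii_cont2 : ContinuousOn
      (fun p : ℝ × (Fin n → ℝ) => fderiv ℝ (fun y => fderiv ℝ (v p.1) y) p.2)
      (Ici (0:ℝ) ×ˢ Ω))
    -- (iii) polynomial-in-time growth, locally uniformly in `x`
    (hiii : ∀ K : Set (Fin n → ℝ), K ⊆ Ω → IsCompact K → ∃ C k : ℝ, 0 < C ∧ 0 ≤ k ∧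
      ∀ t ∈ Ici (0:ℝ), ∀ x ∈ K,
        v t x + |vt t x| + ‖fderiv ℝ (v t) x‖ +
            ‖fderiv ℝ (fun y => fderiv ℝ (v t) y) x‖ ≤
          C * (1 + t) ^ k)
    -- (iv) the equation `ε ∂ₜ(v^{1/m}) = ∇·(γ∇ₓv)` on `(0,∞) × Ω`
    (hiv : ∀ t ∈ Ioi (0:ℝ), ∀ x ∈ Ω, ε x * vt t x = divGammaGrad γ (v t) x)
    (h : ℝ) (hh : 0 < h) :
    ContDiffOn ℝ 2 (fun x => ∫ t in Ioi (0:ℝ), Real.exp (-t / h) * v t x) Ω ∧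
    ∀ x ∈ Ω,
      divGammaGrad γ (fun z => ∫ t in Ioi (0:ℝ), Real.exp (-t / h) * v t z) x =
        (1 / h) * ε x * ∫ t in Ioi (0:ℝ), Real.exp (-t / h) * v t x ^ (1 / m) := by
  have D2 : ∀ t ∈ Ici (0:ℝ), DifferentiableOn ℝ (v t) Ω ∧ DifferentiableOn ℝ (fderiv ℝ (v t)) Ω :=
    fun t ht => by
      have := (contDiffOn_succ_iff_fderiv_of_isOpen (n := 1) hΩ).1 (hii t ht)
      exact ⟨this.1, this.2.2.differentiableOn one_ne_zero⟩
  have T0 : Tempered Ω v := ⟨hv_cont, fun K hK hc => by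
    obtain ⟨C, k, -, -, hC⟩ := hiii K hK hc
    refine ⟨C, k, fun t ht x hx => le_trans ?_ (hC t ht x hx)⟩
    rw [Real.norm_of_nonneg (hv_nonneg t ht x (hK hx))]
    linarith [abs_nonneg (vt t x), norm_nonneg (fderiv ℝ (v t) x),
      norm_nonneg (fderiv ℝ (fun y => fderiv ℝ (v t) y) x)]⟩
  have T1 : Tempered Ω fun t => fderiv ℝ (v t) := ⟨hii_cont1, fun K hK hc => by
    obtain ⟨C, k, -, -, hC⟩ := hiii K hK hc
    refine ⟨C, k, fun t ht x hx => le_trans ?_ (hC t ht x hx)⟩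
    linarith [abs_nonneg (vt t x), hv_nonneg t ht x (hK hx),
      norm_nonneg (fderiv ℝ (fun y => fderiv ℝ (v t) y) x)]⟩
  have T2 : Tempered Ω fun t => fderiv ℝ (fderiv ℝ (v t)) := ⟨hii_cont2, fun K hK hc => by
    obtain ⟨C, k, -, -, hC⟩ := hiii K hK hc
    refine ⟨C, k, fun t ht x hx => le_trans ?_ (hC t ht x hx)⟩
    linarith [abs_nonneg (vt t x), hv_nonneg t ht x (hK hx), norm_nonneg (fderiv ℝ (v t) x)]⟩
  set V : (Fin n → ℝ) → ℝ := fun x => ∫ t in Ioi (0:ℝ), Real.exp (-t / h) * v t x with hV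
  have hV1 : ∀ x ∈ Ω, HasFDerivAt V (∫ t in Ioi (0:ℝ), Real.exp (-t / h) • fderiv ℝ (v t) x) x :=
    fun x hx => laplace_hasFDerivAt hΩ T0 (fun t ht => (D2 t ht).1) T1 hh hx
  have hV2 : ∀ x ∈ Ω, HasFDerivAt (fderiv ℝ V)
      (∫ t in Ioi (0:ℝ), Real.exp (-t / h) • fderiv ℝ (fderiv ℝ (v t)) x) x := fun x hx => by
    refine (laplace_hasFDerivAt hΩ T1 (fun t ht => (D2 t ht).2) T2 hh hx).congr_of_eventuallyEq ?_
    filter_upwards [hΩ.mem_nhds hx] with y hy using (hV1 y hy).fderiv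
  refine ⟨?_, fun x hx => ?_⟩
  · refine (contDiffOn_succ_iff_fderiv_of_isOpen (n := 1) hΩ).2
      ⟨fun x hx => (hV1 x hx).differentiableAt.differentiableWithinAt, by simp, ?_⟩
    refine (contDiffOn_succ_iff_fderiv_of_isOpen (n := 0) hΩ).2
      ⟨fun x hx => (hV2 x hx).differentiableAt.differentiableWithinAt, by simp, ?_⟩
    rw [contDiffOn_zero]
    exact (laplace_continuousOn hΩ T2 hh).congr fun x hx => (hV2 x hx).fderiv
  · have hγx : DifferentiableAt ℝ γ x :=
      (hγ.differentiableOn one_ne_zero).differentiableAt (hΩ.mem_nhds hx)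
    have I1 := T1.integrableOn hh hx
    have I2 := T2.integrableOn hh hx
    -- `∇·(γ∇V)` is the transform of `∇·(γ∇v) = ε ∂ₜ(v^{1/m})`
    have step1 : divGammaGrad γ V x = ε x * ∫ t in Ioi (0:ℝ), Real.exp (-t / h) * vt t x := by
      have J1 : ∀ e : Fin n → ℝ, IntegrableOn
          (fun t => Real.exp (-t / h) * fderiv ℝ (v t) x e) (Ioi 0) := fun e => by
        simpa [IntegrableOn] using I1.apply_continuousLinearMap e
      have J2' : ∀ e : Fin n → ℝ, IntegrableOn
          (fun t => (Real.exp (-t / h) • fderiv ℝ (fderiv ℝ (v t)) x) e) (Ioi 0) := fun e =>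
        I2.apply_continuousLinearMap e
      have J2 : ∀ e : Fin n → ℝ, IntegrableOn
          (fun t => Real.exp (-t / h) * fderiv ℝ (fderiv ℝ (v t)) x e e) (Ioi 0) := fun e => by
        simpa [IntegrableOn] using
          Integrable.apply_continuousLinearMap (J2' e) e
      have E1 : ∀ e, fderiv ℝ V x e =
          ∫ t in Ioi (0:ℝ), Real.exp (-t / h) * fderiv ℝ (v t) x e := fun e => by
        rw [(hV1 x hx).fderiv, ContinuousLinearMap.integral_apply I1]
        simp
      have E2 : ∀ e, fderiv ℝ (fderiv ℝ V) x e e =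
          ∫ t in Ioi (0:ℝ), Real.exp (-t / h) * fderiv ℝ (fderiv ℝ (v t)) x e e := fun e => by
        rw [(hV2 x hx).fderiv, ContinuousLinearMap.integral_apply I2,
          ContinuousLinearMap.integral_apply (J2' e)]
        simp
      rw [divGammaGrad_eq hγx (hV2 x hx).differentiableAt, ← integral_const_mul]
      simp only [E1, E2, ← integral_const_mul]
      simp_rw [← integral_add ((J1 _).const_mul _) ((J2 _).const_mul _)]
      refine (integral_finsetSum _ fun i _ =>
        ((J1 (Pi.single i 1)).const_mul (fderiv ℝ γ x (Pi.single i 1))).add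
          ((J2 (Pi.single i 1)).const_mul (γ x))).symm.trans ?_
      refine setIntegral_congr_fun measurableSet_Ioi fun t ht => ?_
      have ht' := Ioi_subset_Ici_self ht
      have eq := hiv t ht x hx
      rw [divGammaGrad_eq hγx ((D2 t ht').2.differentiableAt (hΩ.mem_nhds hx))] at eq
      calc _ = Real.exp (-t / h) * (ε x * vt t x) := by
            rw [eq, Finset.mul_sum]
            exact Finset.sum_congr rfl fun i _ => by simp only [Pi.add_apply]; ring
        _ = _ := by ring
    obtain ⟨C, k, hC0, hk, hC⟩ := hiii {x} (by simpa using hx) isCompact_singleton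
    have hm0 : 0 < m := by linarith
    -- `C (1+t)^k` bounds `v` and `|vt|`; `1 + C` is needed because `v^{1/m} ≤ 1 + v`
    -- and `1 ≤ (1+t)^k`
    have step2 := laplace_deriv (C := 1 + C) (k := k) hh (w := fun t => v t x ^ (1 / m))
      (w' := fun t => vt t x)
      (by simp only [hv0 x hx]; exact Real.zero_rpow (by positivity)) (hi x hx) (hi_cont x hx) ?_ ?_
    · rw [step1, step2]
      ring
    all_goals
      intro t ht
      have ht0 : (0:ℝ) ≤ t := ht
      have b := hC t ht x rfl
      have v0 := hv_nonneg t ht x hx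
      have h1 : 1 ≤ (1 + t) ^ k := Real.one_le_rpow (by linarith) hk
      have n1 := norm_nonneg (fderiv ℝ (v t) x)
      have n2 := norm_nonneg (fderiv ℝ (fun y => fderiv ℝ (v t) y) x)
      have n3 := abs_nonneg (vt t x)
    · rw [Real.norm_of_nonneg (Real.rpow_nonneg v0 _)]
      have := rpow_le_one_add (p := 1 / m) v0 (by positivity) (by rw [div_le_one hm0]; exact hm.le)
      linarith
    · rw [Real.norm_eq_abs]
      linarith
end

section
/- Let m > 1 with m ≠ 2, let A > 0, B ≥ 0, and let σ > 0 satisfy B·σ^{1/m − 2} ≤ A/2. Then there exists a constant C > 0 such that for all h ≥ 1: (1/h) ∫_σ^∞ e^{-t/h} [ (tA)^{1/m} − (tA − B t^{1/m − 1})^{1/m} ] dt ≤ C · h^{−min(1, 2 − 2/m)}. (Note that tA − B t^{1/m−1} ≥ (A/2) t ≥ 0 for t ≥ σ under the stated hypothesis, so the integrand is well defined and nonnegative.) -/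
open MeasureTheory Real Set

/-!
Write `p = 1/m ∈ (0, 1)`. Since `x ↦ x^(p-1)` is decreasing, `x^p - y^p ≤ y^(p-1) (x - y)` for
`0 < y ≤ x`. With `x = tA` and `y = tA - B t^(p-1) ≥ tA/2` this bounds the bracket by
`K t^(2p-2)`, `K = B (A/2)^(p-1)` (`bracket_bounds`). It remains to bound the Laplace-type integral
of `t^(2p-2)` (`laplace_rpow_le`). If `2p - 2 < -1` the power is integrable at infinity, the
exponential is dropped and the prefactor gives `h⁻¹`. If `2p - 2 > -1` the power is integrable
at `0`, and the integral over all of `(0, ∞)` is the Gamma integral `h^(2p-1) Γ(2p-1)`.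
The excluded value `m = 2` is the borderline exponent `-1`.
-/

/-- A one-sided mean value bound for the concave power, without the factor `p`. -/
lemma rpow_sub_rpow_le_mul {p x y : ℝ} (hp : p ≤ 1) (hy : 0 < y) (hxy : y ≤ x) :
    x ^ p - y ^ p ≤ y ^ (p - 1) * (x - y) := by
  have hx : 0 < x := hy.trans_le hxy
  have h1 : x ^ p = x ^ (p - 1) * x := by rw [rpow_sub_one hx.ne']; field_simp
  have h2 : y ^ p = y ^ (p - 1) * y := by rw [rpow_sub_one hy.ne']; field_simp
  have h3 : x ^ (p - 1) ≤ y ^ (p - 1) := rpow_le_rpow_of_nonpos hy hxy (by linarith)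
  have h4 := mul_le_mul_of_nonneg_right h3 hx.le
  rw [h1, h2, mul_sub]
  linarith

lemma bracket_bounds {p A B σ t : ℝ} (hp0 : 0 < p) (hp : p < 1) (hA : 0 < A) (hB : 0 ≤ B)
    (hσ : 0 < σ) (hσB : B * σ ^ (p - 2) ≤ A / 2) (ht : σ < t) :
    0 ≤ (t * A) ^ p - (t * A - B * t ^ (p - 1)) ^ p ∧
      (t * A) ^ p - (t * A - B * t ^ (p - 1)) ^ p ≤ B * (A / 2) ^ (p - 1) * t ^ (2 * p - 2) := by
  have ht0 : 0 < t := hσ.trans ht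
  have h1 : t ^ (p - 1) = t ^ (p - 2) * t := by
    rw [show p - 2 = p - 1 - 1 by ring, rpow_sub_one ht0.ne' (p - 1)]; field_simp
  have h2 : B * t ^ (p - 2) ≤ A / 2 :=
    (mul_le_mul_of_nonneg_left (rpow_le_rpow_of_nonpos hσ ht.le (by linarith)) hB).trans hσB
  have h3 : B * t ^ (p - 1) ≤ A / 2 * t := by
    rw [h1, ← mul_assoc]; exact mul_le_mul_of_nonneg_right h2 ht0.le
  have h4 : 0 ≤ B * t ^ (p - 1) := by positivity
  have h5 : 0 < A / 2 * t := by positivity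
  have h6 : A / 2 * t ≤ t * A - B * t ^ (p - 1) := by linarith
  have h7 : t * A - B * t ^ (p - 1) ≤ t * A := by linarith
  refine ⟨sub_nonneg.2 (rpow_le_rpow (h5.le.trans h6) h7 hp0.le), ?_⟩
  refine (rpow_sub_rpow_le_mul hp.le (h5.trans_le h6) h7).trans ?_
  have h8 : (t * A - B * t ^ (p - 1)) ^ (p - 1) ≤ (A / 2) ^ (p - 1) * t ^ (p - 1) := by
    rw [← mul_rpow (by positivity) ht0.le]
    exact rpow_le_rpow_of_nonpos h5 h6 (by linarith)
  have h9 : t ^ (2 * p - 2) = t ^ (p - 1) * t ^ (p - 1) := by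
    rw [← rpow_add ht0]; ring_nf
  calc _ = (t * A - B * t ^ (p - 1)) ^ (p - 1) * (B * t ^ (p - 1)) := by ring
    _ ≤ (A / 2) ^ (p - 1) * t ^ (p - 1) * (B * t ^ (p - 1)) := mul_le_mul_of_nonneg_right h8 h4
    _ = _ := by rw [h9]; ring

/-- Decay of the truncated Laplace integral of `t^q` away from the borderline exponent `q = -1`,
where a logarithm of `h` would appear. -/
lemma laplace_rpow_le {q σ : ℝ} (hq : q ≠ -1) (hσ : 0 < σ) :
    ∃ C ≥ (0 : ℝ), ∀ h > (0 : ℝ),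
      IntegrableOn (fun t => Real.exp (-t / h) * t ^ q) (Ioi σ) ∧
      (1 / h) * ∫ t in Ioi σ, Real.exp (-t / h) * t ^ q ≤ C * h ^ (-(min 1 (-q))) := by
  rcases lt_or_gt_of_ne hq with hq | hq
  · have hint : IntegrableOn (fun t : ℝ => t ^ q) (Ioi σ) := integrableOn_Ioi_rpow_of_lt hq hσ
    refine ⟨∫ t in Ioi σ, t ^ q, setIntegral_nonneg measurableSet_Ioi
      fun t ht => rpow_nonneg (hσ.trans ht).le q, fun h hh => ?_⟩
    have hle : ∀ t ∈ Ioi σ, Real.exp (-t / h) * t ^ q ≤ t ^ q := fun t ht => by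
      have ht0 : 0 < t := hσ.trans ht
      refine mul_le_of_le_one_left (rpow_nonneg ht0.le q) (exp_le_one_iff.2 ?_)
      rw [neg_div]
      exact neg_nonpos.2 (by positivity)
    have hI : IntegrableOn (fun t => Real.exp (-t / h) * t ^ q) (Ioi σ) := by
      refine Integrable.mono' hint (by fun_prop) ?_
      filter_upwards [ae_restrict_mem measurableSet_Ioi] with t ht
      have ht0 : 0 < t := hσ.trans ht
      rw [Real.norm_of_nonneg (by positivity)]
      exact hle t ht
    refine ⟨hI, ?_⟩
    rw [min_eq_left (by linarith), rpow_neg_one, one_div, mul_comm]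
    exact mul_le_mul_of_nonneg_right
      (setIntegral_mono_on hI hint measurableSet_Ioi hle) (inv_nonneg.2 hh.le)
  · refine ⟨Gamma (q + 1), (Gamma_pos_of_pos (by linarith)).le, fun h hh => ?_⟩
    have heq : ∀ t : ℝ, Real.exp (-t / h) * t ^ q = t ^ (q + 1 - 1) * Real.exp (-(1 / h * t)) := by
      intro t
      rw [mul_comm, add_sub_cancel_right]; congr 2; ring
    have hI0 : IntegrableOn (fun t => Real.exp (-t / h) * t ^ q) (Ioi 0) := by
      have := integrableOn_rpow_mul_exp_neg_mul_rpow (p := 1) (s := q) (b := 1 / h) hq one_pos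
        (by positivity)
      refine this.congr_fun (fun t _ => ?_) measurableSet_Ioi
      simp only [heq, rpow_one, add_sub_cancel_right, neg_mul]
    refine ⟨hI0.mono_set (Ioi_subset_Ioi hσ.le), ?_⟩
    have hle : ∫ t in Ioi σ, Real.exp (-t / h) * t ^ q ≤ h ^ (q + 1) * Gamma (q + 1) := by
      have h0 : ∫ t in Ioi 0, Real.exp (-t / h) * t ^ q = h ^ (q + 1) * Gamma (q + 1) := by
        simp only [heq]
        rw [integral_rpow_mul_exp_neg_mul_Ioi (by linarith) (by positivity), one_div_one_div]
      rw [← h0]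
      refine setIntegral_mono_set hI0 ?_ (Ioi_subset_Ioi hσ.le).eventuallyLE
      filter_upwards [ae_restrict_mem measurableSet_Ioi] with t ht
      have ht0 : 0 < t := ht
      show 0 ≤ Real.exp (-t / h) * t ^ q
      positivity
    rw [min_eq_right (by linarith), neg_neg]
    calc _ ≤ 1 / h * (h ^ (q + 1) * Gamma (q + 1)) :=
          mul_le_mul_of_nonneg_left hle (by positivity)
      _ = _ := by rw [rpow_add_one hh.ne']; field_simp

theorem source_difference_estimate (m A B σ : ℝ) (hm : 1 < m) (hm2 : m ≠ 2)
    (hA : 0 < A) (hB : 0 ≤ B) (hσ : 0 < σ) (hσB : B * σ ^ (1 / m - 2) ≤ A / 2) :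
    ∃ C > (0:ℝ), ∀ h ≥ (1:ℝ),
      (1 / h) * ∫ t in Ioi σ, Real.exp (-t / h) *
          ((t * A) ^ (1 / m) - (t * A - B * t ^ (1 / m - 1)) ^ (1 / m)) ≤
        C * h ^ (-(min 1 (2 - 2 / m))) := by
  have hm0 : 0 < m := by linarith
  have hp0 : 0 < 1 / m := by positivity
  have hp1 : 1 / m < 1 := (div_lt_one hm0).2 hm
  have hq : 2 * (1 / m) - 2 ≠ -1 := fun h => hm2 (by field_simp at h; linarith)
  have hexp : 2 - 2 / m = -(2 * (1 / m) - 2) := by ring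
  rw [hexp]
  generalize 1 / m = p at *
  obtain ⟨C, hC, H⟩ := laplace_rpow_le hq hσ
  set K := B * (A / 2) ^ (p - 1) with hK
  have hK0 : 0 ≤ K := by positivity
  -- The summand `1` keeps the constant positive when `B = 0`.
  refine ⟨K * C + 1, by positivity, fun h hh => ?_⟩
  have hh0 : 0 < h := by linarith
  obtain ⟨hI, hle⟩ := H h hh0
  have hmono : ∫ t in Ioi σ, Real.exp (-t / h) * ((t * A) ^ p - (t * A - B * t ^ (p - 1)) ^ p) ≤
      ∫ t in Ioi σ, K * (Real.exp (-t / h) * t ^ (2 * p - 2)) := by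
    refine integral_mono_of_nonneg ?_ (hI.const_mul K) ?_
    · filter_upwards [ae_restrict_mem measurableSet_Ioi] with t ht
      exact mul_nonneg (exp_pos _).le (bracket_bounds hp0 hp1 hA hB hσ hσB ht).1
    · filter_upwards [ae_restrict_mem measurableSet_Ioi] with t ht
      have := mul_le_mul_of_nonneg_left (bracket_bounds hp0 hp1 hA hB hσ hσB ht).2
        (exp_pos (-t / h)).le
      exact this.trans_eq (by rw [hK]; ring)
  rw [integral_const_mul] at hmono
  calc _ ≤ 1 / h * (K * ∫ t in Ioi σ, Real.exp (-t / h) * t ^ (2 * p - 2)) :=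
        mul_le_mul_of_nonneg_left hmono (by positivity)
    _ = K * (1 / h * ∫ t in Ioi σ, Real.exp (-t / h) * t ^ (2 * p - 2)) := by ring
    _ ≤ K * (C * h ^ (-(min 1 (-(2 * p - 2))))) := mul_le_mul_of_nonneg_left hle hK0
    _ ≤ _ := by
      rw [← mul_assoc]
      exact mul_le_mul_of_nonneg_right (by linarith) (by positivity)
end

section
/- Let m > 1, t > 0, and let V₀ > 0 and V₁ ≤ 0 be real numbers. Set c = Γ(1/m)^{-1} and w = t V₀ + c t^{1/m − 1} V₁, and suppose w > 0. Then (1/m) w^{1/m − 1} ( V₀ − (1 − 1/m) c t^{1/m − 2} V₁ ) − Γ(1 + 1/m) c t^{1/m − 1} V₀^{1/m} ≥ (V₀/m) ( w^{1/m − 1} − (t V₀)^{1/m − 1} ) ≥ 0. -/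
/-! Since `Γ(1 + 1/m) c = 1/m` and `V₀ (t V₀)^(1/m-1) = t^(1/m-1) V₀^(1/m)`, the Gamma term equals
`(V₀/m) (t V₀)^(1/m-1)`. The first inequality then amounts to dropping the summand
`-(1/m) w^(1/m-1) (1 - 1/m) c t^(1/m-2) V₁`, which is nonnegative because `V₁ ≤ 0`. The second
holds because `w ≤ t V₀` and `x ↦ x^(1/m-1)` is decreasing on the positive reals.
-/

open Real

/-- Pointwise algebraic inequality in the subsolution verification: with `m > 1`, `t > 0`,
`V₀ > 0`, `V₁ ≤ 0`, `c = Γ(1/m)⁻¹` and `w = t V₀ + c t^{1/m−1} V₁ > 0`, one has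
`(1/m) w^{1/m−1} (V₀ − (1 − 1/m) c t^{1/m−2} V₁) − Γ(1+1/m) c t^{1/m−1} V₀^{1/m}
  ≥ (V₀/m)(w^{1/m−1} − (t V₀)^{1/m−1}) ≥ 0`. -/
theorem subsolution_pointwise_inequality (m t V₀ V₁ c w : ℝ)
    (hm : 1 < m) (ht : 0 < t) (hV₀ : 0 < V₀) (hV₁ : V₁ ≤ 0)
    (hc : c = (Real.Gamma (1 / m))⁻¹)
    (hwdef : w = t * V₀ + c * t ^ (1 / m - 1) * V₁)
    (hw : 0 < w) :
    (V₀ / m) * (w ^ (1 / m - 1) - (t * V₀) ^ (1 / m - 1)) ≤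
      (1 / m) * w ^ (1 / m - 1) * (V₀ - (1 - 1 / m) * c * t ^ (1 / m - 2) * V₁) -
        Real.Gamma (1 + 1 / m) * c * t ^ (1 / m - 1) * V₀ ^ (1 / m) ∧
    0 ≤ (V₀ / m) * (w ^ (1 / m - 1) - (t * V₀) ^ (1 / m - 1)) := by
  have hm0 : 0 < m := by linarith
  have hinv : 0 < 1 / m := by positivity
  have hinv1 : 1 / m < 1 := by rw [div_lt_one hm0]; exact hm
  have hG : 0 < Real.Gamma (1 / m) := Real.Gamma_pos_of_pos hinv
  have hcpos : 0 < c := by rw [hc]; positivity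
  have hGc : Real.Gamma (1 + 1 / m) * c = 1 / m := by
    rw [hc, add_comm, Real.Gamma_add_one hinv.ne', mul_assoc, mul_inv_cancel₀ hG.ne', mul_one]
  have hpow : V₀ * (t * V₀) ^ (1 / m - 1) = t ^ (1 / m - 1) * V₀ ^ (1 / m) := by
    rw [Real.mul_rpow ht.le hV₀.le, Real.rpow_sub_one hV₀.ne']
    field_simp
  have hwle : w ≤ t * V₀ := by
    have : c * t ^ (1 / m - 1) * V₁ ≤ 0 := mul_nonpos_of_nonneg_of_nonpos (by positivity) hV₁
    linarith
  have hmono : (t * V₀) ^ (1 / m - 1) ≤ w ^ (1 / m - 1) :=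
    Real.rpow_le_rpow_of_nonpos hw hwle (by linarith)
  refine ⟨?_, mul_nonneg (by positivity) (sub_nonneg.2 hmono)⟩
  have hdrop : 1 / m * w ^ (1 / m - 1) * ((1 - 1 / m) * c * t ^ (1 / m - 2)) * V₁ ≤ 0 := by
    have : 0 < 1 - 1 / m := by linarith
    exact mul_nonpos_of_nonneg_of_nonpos (by positivity) hV₁
  have hgamma : Real.Gamma (1 + 1 / m) * c * t ^ (1 / m - 1) * V₀ ^ (1 / m) =
      V₀ / m * (t * V₀) ^ (1 / m - 1) := by
    rw [hGc, mul_assoc, ← hpow]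
    ring
  rw [hgamma]
  linear_combination hdrop
end
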